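/- For all positive integers m and n, the function 1/cosh^m((1+i)z/2) has a pole of order m at z_n = (2n-1)(1+i)π/2 with Laurent expansion (-1)^{mn} / cosh^m((1+i)z/2) = (i+1)^m Σ_{l=0}^∞ i^l γ_{l,m} (z - z_n)^{2l-m}, where γ_{l,m} = (-1)^m 2^l Σ_{k₁+...+k_m = l, k_j ≥ 0} Π_{j=1}^m (1 - 2^{1-2k_j}) B_{2k_j} / (2k_j)! is rational. In particular γ_{0,m} = 1 and γ_{1,m} = -m/12. -/

import Mathlib

/-- The rational coefficients `γ_{l,m}` from the Laurent expansion of `1/coshᵐ((1+i)z/2)`. -/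
noncomputable def gam (l m : ℕ) : ℚ :=
  (-1) ^ m * 2 ^ l *
    ∑ k ∈ Finset.Nat.antidiagonalTuple m l,
      ∏ j : Fin m,
        (1 - (2 : ℚ) ^ ((1 : ℤ) - 2 * (k j : ℤ))) * bernoulli (2 * k j) /
          (2 * k j).factorial

/-- The pole `z_n = (2n-1)(1+i)π/2`. -/
noncomputable def zpole (n : ℕ) : ℂ := (2 * (n : ℂ) - 1) * (1 + Complex.I) * Real.pi / 2

/-!
The generating series of the Bernoulli numbers converges to `x / (e ^ x - 1)` for `0 < ‖x‖ < 2 * π`,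
because Euler's formula for `ζ(2k)` bounds `B_n / n!` by a multiple of `(2 * π)⁻ⁿ`. Since
`2 * x / (e ^ x - 1) - 2 * x / (e ^ (2 * x) - 1) = x / sinh x`, the series `∑ γ_{k,1} y ^ k`
converges to `x / sinh x` at `y = 2 * x ^ 2`. The numbers `γ_{l,m}` are the coefficients of the
`m`-th power of this series. Finally, `cosh ((1 + i) * z / 2)` is `sinh ((1 + i) * (z - z_n) / 2)`
up to a constant factor, and with `x = (1 + i) * (z - z_n) / 2` one has
`2 * x ^ 2 = i * (z - z_n) ^ 2`.
-/

open PowerSeries hiding exp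
open Complex (I)
open scoped Real

lemma coeff_mul_mul_pow {R : Type*} [CommSemiring R] (f g : R⟦X⟧) (x : R) (n : ℕ) :
    coeff n (f * g) * x ^ n =
      ∑ p ∈ Finset.HasAntidiagonal.antidiagonal n,
        coeff p.1 f * x ^ p.1 * (coeff p.2 g * x ^ p.2) := by
  rw [coeff_mul, Finset.sum_mul]
  refine Finset.sum_congr rfl fun p hp ↦ ?_
  rw [← Finset.HasAntidiagonal.mem_antidiagonal.1 hp]
  ring

section AbsoluteSums

variable {R : Type*} [NormedCommRing R] {f g : R⟦X⟧} {x y s t : R}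

/-- The power series `f` converges absolutely at the point `x`, with sum `s`. Unlike Mathlib's
`PowerSeries.eval₂`, this is about a topology on `R` which need not be linear. -/
structure HasAbsSumAt (f : R⟦X⟧) (x s : R) : Prop where
  summable_norm : Summable fun n ↦ ‖coeff n f * x ^ n‖
  hasSum : HasSum (fun n ↦ coeff n f * x ^ n) s

namespace HasAbsSumAt

lemma of_summable_norm [CompleteSpace R] (hf : Summable fun n ↦ ‖coeff n f * x ^ n‖) :
    HasAbsSumAt f x (∑' n, coeff n f * x ^ n) :=
  ⟨hf, hf.of_norm.hasSum⟩

lemma unique (hs : HasAbsSumAt f x s) (ht : HasAbsSumAt f x t) : s = t :=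
  hs.hasSum.unique ht.hasSum

lemma of_coeff_eq_zero (N : ℕ) (hf : ∀ n ≠ N, coeff n f = 0) :
    HasAbsSumAt f x (coeff N f * x ^ N) where
  summable_norm := summable_of_ne_finset_zero (s := {N}) fun n hn ↦ by
    simp [hf n (by simpa using hn)]
  hasSum := hasSum_single N fun n hn ↦ by simp [hf n hn]

lemma one (x : R) : HasAbsSumAt 1 x 1 := by
  simpa using of_coeff_eq_zero (f := (1 : R⟦X⟧)) (x := x) 0 fun n hn ↦ by simp [coeff_one, hn]

lemma X (x : R) : HasAbsSumAt PowerSeries.X x x := by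
  simpa using of_coeff_eq_zero (f := PowerSeries.X) (x := x) 1 fun n hn ↦ by simp [coeff_X, hn]

lemma sub (hf : HasAbsSumAt f x s) (hg : HasAbsSumAt g x t) : HasAbsSumAt (f - g) x (s - t) where
  summable_norm :=
    (hf.summable_norm.add hg.summable_norm).of_nonneg_of_le (fun _ ↦ norm_nonneg _) fun n ↦ by
      simpa only [map_sub, sub_mul] using norm_sub_le (coeff n f * x ^ n) (coeff n g * x ^ n)
  hasSum := by simpa only [map_sub, sub_mul] using hf.hasSum.sub hg.hasSum

lemma smul (a : R) (hf : HasAbsSumAt f x s) : HasAbsSumAt (a • f) x (a * s) where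
  summable_norm :=
    (hf.summable_norm.mul_left ‖a‖).of_nonneg_of_le (fun _ ↦ norm_nonneg _) fun n ↦ by
      simpa only [coeff_smul, smul_eq_mul, mul_assoc] using norm_mul_le a (coeff n f * x ^ n)
  hasSum := by simpa only [coeff_smul, smul_eq_mul, mul_assoc] using hf.hasSum.mul_left a

lemma rescale {a : R} (hf : HasAbsSumAt f (a * x) s) :
    HasAbsSumAt (PowerSeries.rescale a f) x s := by
  have hcoeff (n : ℕ) : coeff n f * (a * x) ^ n = coeff n (PowerSeries.rescale a f) * x ^ n := by
    rw [coeff_rescale]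
    ring
  exact ⟨by simpa only [hcoeff] using hf.summable_norm, by simpa only [hcoeff] using hf.hasSum⟩

lemma mul [CompleteSpace R] (hf : HasAbsSumAt f x s) (hg : HasAbsSumAt g x t) :
    HasAbsSumAt (f * g) x (s * t) := by
  have hsum : Summable fun n ↦ ‖coeff n (f * g) * x ^ n‖ := by
    simpa only [coeff_mul_mul_pow] using
      summable_norm_sum_mul_antidiagonal_of_summable_norm hf.summable_norm hg.summable_norm
  have htsum : s * t = ∑' n, coeff n (f * g) * x ^ n := by
    simpa only [coeff_mul_mul_pow, hf.hasSum.tsum_eq, hg.hasSum.tsum_eq] using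
      tsum_mul_tsum_eq_tsum_sum_antidiagonal_of_summable_norm hf.summable_norm hg.summable_norm
  exact htsum ▸ of_summable_norm hsum

lemma pow [CompleteSpace R] (hf : HasAbsSumAt f x s) (m : ℕ) : HasAbsSumAt (f ^ m) x (s ^ m) := by
  induction m with
  | zero => simpa only [pow_zero] using one x
  | succ m ih => simpa only [pow_succ] using ih.mul hf

lemma of_even (hf : HasAbsSumAt f x s) (hodd : ∀ n, Odd n → coeff n f = 0)
    (heven : ∀ k, coeff (2 * k) f * x ^ (2 * k) = coeff k g * y ^ k) : HasAbsSumAt g y s := by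
  have hinj : Function.Injective fun k : ℕ ↦ 2 * k := mul_right_injective₀ two_ne_zero
  have hzero (n : ℕ) (hn : n ∉ Set.range fun k : ℕ ↦ 2 * k) : coeff n f * x ^ n = 0 := by
    obtain ⟨k, rfl | rfl⟩ := n.even_or_odd'
    · exact absurd ⟨k, rfl⟩ hn
    · rw [hodd _ ⟨k, rfl⟩, zero_mul]
  constructor
  · simpa only [Function.comp_def, heven] using hf.summable_norm.comp_injective hinj
  · simpa only [Function.comp_def, heven] using (hinj.hasSum_iff hzero).2 hf.hasSum

end HasAbsSumAt

lemma hasAbsSumAt_exp (x : ℂ) : HasAbsSumAt (PowerSeries.exp ℂ) x (Complex.exp x) := by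
  have hcoeff (n : ℕ) : x ^ n / n.factorial = coeff n (PowerSeries.exp ℂ) * x ^ n := by
    simp [coeff_exp, div_eq_inv_mul]
  constructor
  · simpa only [hcoeff] using NormedSpace.norm_expSeries_div_summable x
  · simpa only [hcoeff, Complex.exp_eq_exp_ℂ] using NormedSpace.expSeries_div_hasSum_exp x

end AbsoluteSums

section Bernoulli

lemma tsum_one_div_nat_pow_two_mul_le {k : ℕ} (hk : k ≠ 0) :
    ∑' n : ℕ, 1 / (n : ℝ) ^ (2 * k) ≤ π ^ 2 / 6 := by
  rw [← hasSum_zeta_two.tsum_eq]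
  refine (hasSum_zeta_nat hk).summable.tsum_le_tsum (fun n ↦ ?_) hasSum_zeta_two.summable
  rcases n.eq_zero_or_pos with rfl | hn
  · simp [hk]
  · exact one_div_pow_le_one_div_pow_of_le (by exact_mod_cast hn) (by lia)

lemma abs_bernoulli_two_mul_div_factorial_le {k : ℕ} (hk : k ≠ 0) :
    |(bernoulli (2 * k) / (2 * k).factorial : ℝ)| ≤ π ^ 2 / 3 / (2 * π) ^ (2 * k) := by
  have hzeta : (2 * π) ^ (2 * k) * (bernoulli (2 * k) / (2 * k).factorial) =
      (-1) ^ (k + 1) * (2 * ∑' n : ℕ, 1 / (n : ℝ) ^ (2 * k)) := by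
    have hsign : ((-1) ^ (k + 1) * (-1) ^ (k + 1) : ℝ) = 1 := by rw [← mul_pow]; norm_num
    have htwo : (2 : ℝ) ^ (2 * k) = 2 * 2 ^ (2 * k - 1) := (mul_pow_sub_one (by lia) 2).symm
    rw [(hasSum_zeta_nat hk).tsum_eq, mul_pow, htwo]
    linear_combination (-2 * 2 ^ (2 * k - 1) * π ^ (2 * k) *
      (bernoulli (2 * k) / (2 * k).factorial)) * hsign
  have hnonneg : 0 ≤ ∑' n : ℕ, 1 / (n : ℝ) ^ (2 * k) := tsum_nonneg fun n ↦ by positivity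
  rw [le_div_iff₀' (by positivity)]
  calc (2 * π) ^ (2 * k) * |(bernoulli (2 * k) / (2 * k).factorial : ℝ)|
      = |(2 * π) ^ (2 * k) * (bernoulli (2 * k) / (2 * k).factorial : ℝ)| := by
        rw [abs_mul, abs_of_pos (by positivity : 0 < (2 * π) ^ (2 * k))]
    _ = 2 * ∑' n : ℕ, 1 / (n : ℝ) ^ (2 * k) := by
        rw [hzeta, abs_mul, abs_neg_one_pow, one_mul,
          abs_of_nonneg (mul_nonneg zero_le_two hnonneg)]
    _ ≤ π ^ 2 / 3 := by linarith [tsum_one_div_nat_pow_two_mul_le hk]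

lemma abs_bernoulli_div_factorial_le (n : ℕ) :
    |(bernoulli n / n.factorial : ℝ)| ≤ π ^ 2 / 3 / (2 * π) ^ n := by
  rcases n.even_or_odd' with ⟨k, rfl | rfl⟩
  · rcases eq_or_ne k 0 with rfl | hk
    · norm_num
      nlinarith [Real.pi_gt_three]
    · exact abs_bernoulli_two_mul_div_factorial_le hk
  · rcases eq_or_ne k 0 with rfl | hk
    · have hbound : π ^ 2 / 3 / (2 * π) = π / 6 := by field_simp; norm_num
      norm_num [hbound, bernoulli_one, abs_div]
      linarith [Real.pi_gt_three]
    · rw [bernoulli_eq_zero_of_odd ⟨k, rfl⟩ (by lia)]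
      simp only [Rat.cast_zero, zero_div, abs_zero]
      positivity

lemma summable_norm_coeff_bernoulliPowerSeries_mul_pow {x : ℂ} (hx : ‖x‖ < 2 * π) :
    Summable fun n ↦ ‖coeff n (bernoulliPowerSeries ℂ) * x ^ n‖ := by
  have hratio : ‖x‖ / (2 * π) < 1 := (div_lt_one (by positivity)).2 hx
  refine ((summable_geometric_of_lt_one (by positivity) hratio).mul_left
    (π ^ 2 / 3)).of_nonneg_of_le (fun _ ↦ norm_nonneg _) fun n ↦ ?_
  have hcoeff : ‖coeff n (bernoulliPowerSeries ℂ)‖ = |(bernoulli n / n.factorial : ℝ)| := by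
    rw [← Real.norm_eq_abs, ← Complex.norm_real]
    simp [bernoulliPowerSeries]
  calc ‖coeff n (bernoulliPowerSeries ℂ) * x ^ n‖
      ≤ π ^ 2 / 3 / (2 * π) ^ n * ‖x‖ ^ n := by
        rw [norm_mul, norm_pow, hcoeff]
        gcongr
        exact abs_bernoulli_div_factorial_le n
    _ = π ^ 2 / 3 * (‖x‖ / (2 * π)) ^ n := by rw [div_pow]; ring

lemma exp_ne_one_of_norm_lt_two_pi {x : ℂ} (hx0 : x ≠ 0) (hx : ‖x‖ < 2 * π) :
    Complex.exp x ≠ 1 := by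
  rw [Ne, Complex.exp_eq_one_iff]
  rintro ⟨n, rfl⟩
  have hn : n ≠ 0 := by rintro rfl; simp at hx0
  have hn1 : (1 : ℝ) ≤ |(n : ℝ)| := by exact_mod_cast Int.one_le_abs hn
  have hnorm : ‖(n * (2 * π * I) : ℂ)‖ = |(n : ℝ)| * (2 * π) := by
    simp [abs_of_pos Real.pi_pos]
  rw [hnorm] at hx
  nlinarith [Real.pi_pos]

lemma hasAbsSumAt_bernoulliPowerSeries {x : ℂ} (hx0 : x ≠ 0) (hx : ‖x‖ < 2 * π) :
    HasAbsSumAt (bernoulliPowerSeries ℂ) x (x / (Complex.exp x - 1)) := by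
  have hB := HasAbsSumAt.of_summable_norm (summable_norm_coeff_bernoulliPowerSeries_mul_pow hx)
  have hprod := hB.mul ((hasAbsSumAt_exp x).sub (HasAbsSumAt.one x))
  rw [bernoulliPowerSeries_mul_exp_sub_one] at hprod
  have hexp : Complex.exp x - 1 ≠ 0 := sub_ne_zero.2 (exp_ne_one_of_norm_lt_two_pi hx0 hx)
  rwa [eq_div_of_mul_eq hexp (hprod.unique (HasAbsSumAt.X x))] at hB

end Bernoulli

section Coefficients

/-- The generating series `∑ γ_{l,1} X ^ l`, whose `m`-th power is the generating series
`∑ γ_{l,m} X ^ l`. -/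
noncomputable def gamSeries : ℚ⟦X⟧ := mk fun l ↦ gam l 1

lemma coeff_pow_eq_sum_antidiagonalTuple {R : Type*} [CommSemiring R] (f : R⟦X⟧) (l m : ℕ) :
    coeff l (f ^ m) = ∑ k ∈ Finset.Nat.antidiagonalTuple m l, ∏ j, coeff (k j) f := by
  rw [← Fin.prod_const m f, coeff_prod]
  exact Finset.sum_equiv Finsupp.equivFunOnFinite
    (fun k ↦ by simp [Finset.Nat.mem_antidiagonalTuple]) fun k _ ↦ rfl

lemma gam_one_right (l : ℕ) :
    gam l 1 = -2 ^ l * ((1 - (2 : ℚ) ^ ((1 : ℤ) - 2 * l)) * bernoulli (2 * l) /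
      (2 * l).factorial) := by
  simp [gam]

lemma gam_eq_coeff_gamSeries_pow (l m : ℕ) : gam l m = coeff l (gamSeries ^ m) := by
  rw [coeff_pow_eq_sum_antidiagonalTuple, gam, Finset.mul_sum]
  refine Finset.sum_congr rfl fun k hk ↦ ?_
  simp only [gamSeries, coeff_mk, gam_one_right, neg_mul, Finset.prod_neg, Finset.prod_mul_distrib,
    Finset.prod_pow_eq_pow_sum, Finset.Nat.mem_antidiagonalTuple.1 hk, Finset.card_univ,
    Fintype.card_fin, mul_assoc]

lemma constantCoeff_gamSeries : constantCoeff gamSeries = 1 := by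
  norm_num [← coeff_zero_eq_constantCoeff_apply, gamSeries, gam_one_right]

lemma gam_zero_left (m : ℕ) : gam 0 m = 1 := by
  simp [gam_eq_coeff_gamSeries_pow, constantCoeff_gamSeries]

lemma gam_one_left (m : ℕ) : gam 1 m = -m / 12 := by
  have hone : coeff 1 gamSeries = -1 / 12 := by
    norm_num [gamSeries, gam_one_right, Nat.factorial]
  rw [gam_eq_coeff_gamSeries_pow, coeff_one_pow, hone, constantCoeff_gamSeries, one_pow]
  ring

end Coefficients

section Expansion

lemma two_mul_div_exp_sub_one_sub_eq_div_sinh {x : ℂ} (hx : Complex.exp (2 * x) ≠ 1) :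
    2 * (x / (Complex.exp x - 1)) - 2 * x / (Complex.exp (2 * x) - 1) = x / Complex.sinh x := by
  have hsq : Complex.exp (2 * x) = Complex.exp x ^ 2 := by rw [← Complex.exp_nat_mul]; norm_num
  have hfactor : Complex.exp x ^ 2 - 1 = (Complex.exp x - 1) * (Complex.exp x + 1) := by ring
  have hsinh : Complex.sinh x = (Complex.exp x ^ 2 - 1) / (2 * Complex.exp x) := by
    rw [Complex.sinh, Complex.exp_neg]
    field_simp
  rw [hsq, ← sub_ne_zero, hfactor, mul_ne_zero_iff] at hx
  obtain ⟨hsub, hadd⟩ := hx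
  rw [hsinh, hsq, hfactor]
  field_simp
  ring

lemma two_sub_two_pow_mul_bernoulli_div_factorial (k : ℕ) :
    (2 - 2 ^ (2 * k)) * (bernoulli (2 * k) / (2 * k).factorial) = 2 ^ k * gam k 1 := by
  rw [gam_one_right, zpow_sub₀ two_ne_zero, zpow_one, zpow_mul, zpow_ofNat, zpow_natCast]
  field_simp
  simp only [← pow_mul, mul_comm k]
  ring

lemma hasAbsSumAt_gamSeries {x : ℂ} (hx0 : x ≠ 0) (hx : ‖x‖ < π) :
    HasAbsSumAt (map (algebraMap ℚ ℂ) gamSeries) (2 * x ^ 2) (x / Complex.sinh x) := by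
  have hx2 : ‖2 * x‖ < 2 * π := by simpa using hx
  have h2x0 : 2 * x ≠ 0 := mul_ne_zero two_ne_zero hx0
  have hB := hasAbsSumAt_bernoulliPowerSeries hx0 (hx.trans (by linarith [Real.pi_pos]))
  have hdiff := (hB.smul 2).sub (hasAbsSumAt_bernoulliPowerSeries h2x0 hx2).rescale
  rw [two_mul_div_exp_sub_one_sub_eq_div_sinh (exp_ne_one_of_norm_lt_two_pi h2x0 hx2)] at hdiff
  have hcoeff (n : ℕ) : coeff n ((2 : ℂ) • bernoulliPowerSeries ℂ -
      PowerSeries.rescale 2 (bernoulliPowerSeries ℂ)) =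
        algebraMap ℚ ℂ ((2 - 2 ^ n) * (bernoulli n / n.factorial)) := by
    simp [bernoulliPowerSeries, coeff_rescale, sub_mul]
  refine hdiff.of_even (fun n hn ↦ ?_) fun k ↦ ?_
  · rw [hcoeff]
    rcases eq_or_ne n 1 with rfl | hn1
    · norm_num
    · simp [bernoulli_eq_zero_of_odd hn (by have := hn.pos; lia)]
  · rw [hcoeff, two_sub_two_pow_mul_bernoulli_div_factorial, coeff_map, gamSeries, coeff_mk,
      mul_pow, ← pow_mul, map_mul, map_pow, map_ofNat]
    ring

lemma hasSum_gam_mul_pow (m : ℕ) {x : ℂ} (hx0 : x ≠ 0) (hx : ‖x‖ < π) :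
    HasSum (fun l ↦ (gam l m : ℂ) * (2 * x ^ 2) ^ l) ((x / Complex.sinh x) ^ m) := by
  simpa only [← map_pow, coeff_map, ← gam_eq_coeff_gamSeries_pow, eq_ratCast] using
    ((hasAbsSumAt_gamSeries hx0 hx).pow m).hasSum

lemma cosh_add_int_mul_pi_sub_pi_div_two_mul_I (n : ℤ) (x : ℂ) :
    Complex.cosh (x + (n * π - π / 2) * I) = -(-1) ^ n * I * Complex.sinh x := by
  have hcos : Complex.cos (n * π) = (-1) ^ n := by
    simpa using congrArg ((↑) : ℝ → ℂ) (Real.cos_int_mul_pi n)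
  rw [Complex.cosh_add, Complex.cosh_mul_I, Complex.sinh_mul_I, Complex.cos_sub_pi_div_two,
    Complex.sin_sub_pi_div_two, Complex.sin_int_mul_pi, hcos]
  ring

lemma norm_one_add_I_mul_div_two_lt_pi {w : ℂ} (hw : ‖w‖ < √2 * π) : ‖(1 + I) * w / 2‖ < π := by
  have hI : ‖1 + I‖ = √2 := by simp [Complex.norm_eq_sqrt_sq_add_sq, one_add_one_eq_two]
  calc ‖(1 + I) * w / 2‖ = √2 * ‖w‖ / 2 := by simp [hI]
    _ < √2 * (√2 * π) / 2 := by gcongr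
    _ = π := by rw [← mul_assoc, Real.mul_self_sqrt zero_le_two]; ring

lemma neg_one_zpow_div_cosh {n : ℤ} {p z : ℂ} (hp : p = (2 * n - 1) * (1 + I) * π / 2)
    (hz : z ≠ p) :
    (-1) ^ n / Complex.cosh ((1 + I) * z / 2) =
      (1 + I) / (z - p) *
        ((1 + I) * (z - p) / 2 / Complex.sinh ((1 + I) * (z - p) / 2)) := by
  have hshift : (1 + I) * z / 2 = (1 + I) * (z - p) / 2 + (n * π - π / 2) * I := by
    rw [hp]
    linear_combination (2 * (n : ℂ) - 1) * π / 4 * Complex.I_sq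
  have hw : z - p ≠ 0 := sub_ne_zero.2 hz
  have hsign : (-1 : ℂ) ^ n ≠ 0 := zpow_ne_zero n (by norm_num)
  have hfactor : (1 + I) / (z - p) * ((1 + I) * (z - p) / 2) = I := by
    field_simp
    linear_combination Complex.I_sq
  calc (-1) ^ n / Complex.cosh ((1 + I) * z / 2)
      = I / Complex.sinh ((1 + I) * (z - p) / 2) := by
        rw [hshift, cosh_add_int_mul_pi_sub_pi_div_two_mul_I, neg_mul, neg_mul, mul_assoc, div_neg,
          div_mul_cancel_left₀ hsign, mul_inv, Complex.inv_I]
        ring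
    _ = _ := by rw [← mul_div_assoc, hfactor]

lemma one_add_I_div_pow_mul_two_mul_sq_pow {w : ℂ} (hw : w ≠ 0) (c : ℂ) (l m : ℕ) :
    ((1 + I) / w) ^ m * (c * (2 * ((1 + I) * w / 2) ^ 2) ^ l) =
      (I + 1) ^ m * (I ^ l * c * w ^ (2 * (l : ℤ) - (m : ℤ))) := by
  have hsq : 2 * ((1 + I) * w / 2) ^ 2 = I * w ^ 2 := by
    linear_combination w ^ 2 / 2 * Complex.I_sq
  rw [hsq, zpow_sub₀ hw, zpow_mul, zpow_natCast, zpow_natCast, zpow_ofNat, div_pow, mul_pow]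
  ring

end Expansion

theorem laurent_expansion_cosh_power_general (m : ℕ) (n : ℤ) {p : ℂ}
    (hp : p = (2 * n - 1) * (1 + I) * π / 2) :
    gam 0 m = 1 ∧ gam 1 m = -(m : ℚ) / 12 ∧
    ∀ z ≠ p, ‖z - p‖ < √2 * π →
      HasSum (fun l : ℕ ↦ (I + 1) ^ m * (I ^ l * (gam l m : ℂ) * (z - p) ^ (2 * (l : ℤ) - (m : ℤ))))
        ((-1 : ℂ) ^ (m * n) / Complex.cosh ((1 + I) * z / 2) ^ m) := by
  refine ⟨gam_zero_left m, gam_one_left m, fun z hz hzp ↦ ?_⟩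
  have hw : z - p ≠ 0 := sub_ne_zero.2 hz
  have hI : 1 + I ≠ 0 := fun h ↦ by simpa using congrArg Complex.re h
  have hx0 : (1 + I) * (z - p) / 2 ≠ 0 := div_ne_zero (mul_ne_zero hI hw) two_ne_zero
  rw [mul_comm (m : ℤ), zpow_mul, zpow_natCast, ← div_pow, neg_one_zpow_div_cosh hp hz, mul_pow]
  simpa only [one_add_I_div_pow_mul_two_mul_sq_pow hw] using
    (hasSum_gam_mul_pow m hx0 (norm_one_add_I_mul_div_two_lt_pi hzp)).mul_left
      (((1 + I) / (z - p)) ^ m)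

theorem laurent_expansion_cosh_power (m n : ℕ) (hm : 0 < m) (hn : 0 < n) :
    gam 0 m = 1 ∧ gam 1 m = -(m : ℚ) / 12 ∧
    ∀ᶠ z in nhdsWithin (zpole n) {zpole n}ᶜ,
      (-1 : ℂ) ^ (m * n) / Complex.cosh ((1 + Complex.I) * z / 2) ^ m
        = (Complex.I + 1) ^ m *
            ∑' l : ℕ, Complex.I ^ l * (gam l m : ℂ) *
              (z - zpole n) ^ (2 * (l : ℤ) - (m : ℤ)) := by
  obtain ⟨h0, h1, hsum⟩ := laurent_expansion_cosh_power_general m n (p := zpole n) (by simp [zpole])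
  refine ⟨h0, h1, ?_⟩
  simp only [← Nat.cast_mul, zpow_natCast] at hsum
  filter_upwards [self_mem_nhdsWithin,
    nhdsWithin_le_nhds (Metric.ball_mem_nhds (zpole n) (by positivity : 0 < √2 * π))] with z hz hzn
  rw [← tsum_mul_left, (hsum z hz (mem_ball_iff_norm.1 hzn)).tsum_eq]
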